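/- Let d ≥ 1, 1 ≤ s < d, and let C ∈ ℝ^{d×d×d} be the core tensor. If G ∈ (I_{s−1} ⊕ GL_{d−s+1})*C, then there exist an index s ≤ t ≤ d and a vector x ∈ ℝ^{d−s} such that the tensor H := U^{(s,x)} P^{(s,t)} * G lies in the orbit of C under the group of block matrices diag(I_{s−1}, [[h, 0],[v, B]]) with h ∈ ℝ, h ≠ 0, v ∈ ℝ^{d−s}, and B ∈ GL_{d−s}; moreover H satisfies: H_{sss} ≠ 0; H_{iss} = H_{sis} for all s ≤ i ≤ d; H_{iss} H_{sjs} = H_{ijs} H_{sss} for all 1 ≤ i ≤ d and s ≤ j ≤ d; and H_{ssk} H_{sjs} = H_{jsk} H_{sss} for all s < j,k ≤ d. -/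

import Mathlib

/-!
Write `G = A * C` with `A ∈ I_{p} ⊕ GL`, and let `y` be row `p` of `A⁻¹`, so that `y A = e_p`.
As the first `p` columns of `A` are unit vectors, `y` vanishes on the indices `< p`; as `y ≠ 0`, some
`t ≥ p` has `y t ≠ 0`. With `x γ = y (σ γ) / y t`, where `σ` swaps `p` and `t`, row `p` of `U P` is
`y / y t` permuted by `σ`, hence row `p` of `A' = U P A` is `e_p / y t`; the remaining rows of `A'`
are rows of `A`. So `A'` lies in the required group, and `H = A' * C` because the congruence
action is multiplicative (`congrAct_mul`).

The identities for `H` follow from the sparsity of `A'` and `C`: row `p` of `A'` is supported at `p`, rows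
`≥ p` are supported on columns `≥ p`, and `C α β γ = 0` unless `α ≤ β ≤ γ`. Hence the sums defining the
relevant entries of `H` factor as products of single sums (`entry_ijp`, `entry_jpk`).
-/

open Matrix BigOperators

/-- The core tensor `C ∈ ℝ^{d×d×d}` (0-based indices). -/
def coreTensor (d : ℕ) : Fin d → Fin d → Fin d → ℝ := fun i j k =>
  if i = j ∧ j = k then 1
  else if (i < j ∧ j = k) ∨ (i = j ∧ j < k) then 3
  else if i < j ∧ j < k then 6
  else 0

/-- The matrix-tensor congruence action `A * T`. -/
noncomputable def congrAct {d : ℕ} (A : Matrix (Fin d) (Fin d) ℝ)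
    (T : Fin d → Fin d → Fin d → ℝ) : Fin d → Fin d → Fin d → ℝ :=
  fun i j k => ∑ α, ∑ β, ∑ γ, T α β γ * A i α * A j β * A k γ


/-- Membership in `I_s ⊕ GL_{d-s}`: an invertible matrix whose rows and columns
with (0-based) index `< s` agree with the identity matrix. -/
def IsBlockIdGL (d s : ℕ) (A : Matrix (Fin d) (Fin d) ℝ) : Prop :=
  IsUnit A ∧ ∀ i j : Fin d, ((i : ℕ) < s ∨ (j : ℕ) < s) →
    A i j = if i = j then 1 else 0

/-- Membership in the group of block matrices `diag(I_p, [[h, 0], [v, B]])` with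
`h ≠ 0` and `B ∈ GL`: an invertible matrix which agrees with the identity on all
rows and columns of (0-based) index `< p`, and whose row `p` vanishes to the right
of the diagonal. (Invertibility forces `A p p ≠ 0` and the lower-right block to be
invertible.) -/
def IsBlockIdLowGL (d : ℕ) (p : Fin d) (A : Matrix (Fin d) (Fin d) ℝ) : Prop :=
  IsUnit A ∧ (∀ i j : Fin d, ((i : ℕ) < (p : ℕ) ∨ (j : ℕ) < (p : ℕ)) →
    A i j = if i = j then 1 else 0) ∧ ∀ j : Fin d, p < j → A p j = 0

/-- The upper Gauss matrix `U^{(p,x)} = I_d + Σ_{γ > p} x_γ E_{pγ}`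
(with the entries of `x` indexed by the column `γ > p` where they are placed). -/
def upperGauss (d : ℕ) (p : Fin d) (x : Fin d → ℝ) : Matrix (Fin d) (Fin d) ℝ :=
  Matrix.of fun i j =>
    (if i = j then 1 else 0) + (if i = p ∧ p < j then x j else 0)

/-- The permutation matrix of a permutation of `Fin d`. -/
def permMat (d : ℕ) (σ : Equiv.Perm (Fin d)) : Matrix (Fin d) (Fin d) ℝ :=
  Matrix.of fun i j => if σ i = j then 1 else 0

theorem congrAct_mul {d : ℕ} (M A : Matrix (Fin d) (Fin d) ℝ)
    (T : Fin d → Fin d → Fin d → ℝ) :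
    congrAct M (congrAct A T) = congrAct (M * A) T := by
  funext i j k
  have e1 : ∀ f : Fin d → Fin d → Fin d → ℝ,
      ∑ a, ∑ b, ∑ c, f a b c = ∑ q : Fin d × Fin d × Fin d, f q.1 q.2.1 q.2.2 := by
    intro f
    simp only [Fintype.sum_prod_type]
  have e2 : ∀ f g h : Fin d → ℝ, (∑ a, f a) * (∑ b, g b) * (∑ c, h c)
      = ∑ a, ∑ b, ∑ c, f a * g b * h c := by
    intro f g h
    rw [Finset.sum_mul_sum, Finset.sum_mul]
    refine Finset.sum_congr rfl fun a _ => ?_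
    rw [Finset.sum_mul]
    exact Finset.sum_congr rfl fun b _ => Finset.mul_sum _ _ _
  have e3 : ∀ a b c, T a b c * (M * A) i a * (M * A) j b * (M * A) k c
      = ∑ q : Fin d × Fin d × Fin d, T a b c *
        ((M i q.1 * A q.1 a) * (M j q.2.1 * A q.2.1 b) * (M k q.2.2 * A q.2.2 c)) := by
    intro a b c
    rw [← Finset.mul_sum, ← e1 (fun x y z => (M i x * A x a) * (M j y * A y b) * (M k z * A z c)),
      ← e2]
    simp only [Matrix.mul_apply]
    ring
  simp only [congrAct, e3]
  rw [e1, e1]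
  simp only [e1, Finset.sum_mul]
  rw [Finset.sum_comm]
  refine Finset.sum_congr rfl fun q _ => Finset.sum_congr rfl fun r _ => ?_
  ring

section Entries

variable {d : ℕ} {p : Fin d} {A : Matrix (Fin d) (Fin d) ℝ}

theorem coreTensor_eq_zero {i j k : Fin d} (h : j < i ∨ k < j) : coreTensor d i j k = 0 := by
  unfold coreTensor
  rw [if_neg, if_neg, if_neg] <;> grind

theorem coreTensor_diag (i : Fin d) : coreTensor d i i i = 1 := by
  simp [coreTensor]

theorem IsBlockIdLowGL.row_p (hA : IsBlockIdLowGL d p A) {j : Fin d} (hj : j ≠ p) :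
    A p j = 0 := by
  rcases lt_or_gt_of_ne hj with h | h
  · rw [hA.2.1 p j (Or.inr h), if_neg hj.symm]
  · exact hA.2.2 j h

theorem IsBlockIdLowGL.lower_left (hA : IsBlockIdLowGL d p A) {i j : Fin d} (hi : p ≤ i)
    (hj : j < p) : A i j = 0 := by
  rw [hA.2.1 i j (Or.inr hj), if_neg (hj.trans_le hi).ne']

/-- Since `k = p` forces `γ = p`, hence `β ≤ p`, and `j ≥ p` forces `β ≥ p`, only `β = γ = p`
contributes to this entry. -/
theorem entry_ijp (hA : IsBlockIdLowGL d p A) (i j : Fin d) (hj : p ≤ j) :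
    congrAct A (coreTensor d) i j p
      = A p p * A j p * ∑ α, coreTensor d α p p * A i α := by
  unfold congrAct
  rw [Finset.mul_sum]
  refine Finset.sum_congr rfl fun α _ => ?_
  rw [Finset.sum_eq_single p, Finset.sum_eq_single p]
  · ring
  · intro γ _ hγ
    rw [hA.row_p hγ, mul_zero]
  · simp
  · intro β _ hβ
    refine Finset.sum_eq_zero fun γ _ => ?_
    by_cases hγ : γ = p
    · subst hγ
      rcases lt_or_gt_of_ne hβ with h | h
      · rw [hA.lower_left hj h]; ring
      · rw [coreTensor_eq_zero (Or.inr h)]; ring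
    · rw [hA.row_p hγ, mul_zero]
  · simp

/-- Only `α = β = p` contributes to this entry. -/
theorem entry_jpk (hA : IsBlockIdLowGL d p A) (j k : Fin d) (hj : p ≤ j) :
    congrAct A (coreTensor d) j p k
      = A p p * A j p * ∑ γ, coreTensor d p p γ * A k γ := by
  unfold congrAct
  rw [Finset.sum_eq_single p, Finset.sum_eq_single p]
  · rw [Finset.mul_sum]
    refine Finset.sum_congr rfl fun γ _ => ?_
    ring
  · intro β _ hβ
    refine Finset.sum_eq_zero fun γ _ => ?_
    rw [hA.row_p hβ]; ring
  · simp
  · intro α _ hα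
    refine Finset.sum_eq_zero fun β _ => Finset.sum_eq_zero fun γ _ => ?_
    by_cases hβ : β = p
    · subst hβ
      rcases lt_or_gt_of_ne hα with h | h
      · rw [hA.lower_left hj h]; ring
      · rw [coreTensor_eq_zero (Or.inl h)]; ring
    · rw [hA.row_p hβ]; ring
  · simp

theorem core_sum_of_le (hA : IsBlockIdLowGL d p A) {i : Fin d} (hi : p ≤ i) :
    ∑ α, coreTensor d α p p * A i α = A i p := by
  rw [Finset.sum_eq_single p]
  · rw [coreTensor_diag, one_mul]
  · intro α _ hα
    rcases lt_or_gt_of_ne hα with h | h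
    · rw [hA.lower_left hi h, mul_zero]
    · rw [coreTensor_eq_zero (Or.inl h), zero_mul]
  · simp

theorem IsBlockIdLowGL.pivot_ne_zero (hA : IsBlockIdLowGL d p A) : A p p ≠ 0 := by
  intro h0
  have hdet : A.det = 0 := Matrix.det_eq_zero_of_row_eq_zero p fun j => by
    by_cases hj : j = p
    · rw [hj, h0]
    · exact hA.row_p hj
  have := (Matrix.isUnit_iff_isUnit_det A).1 hA.1
  rw [hdet] at this
  exact not_isUnit_zero this

end Entries

theorem isUnit_upperGauss (d : ℕ) (p : Fin d) (x : Fin d → ℝ) : IsUnit (upperGauss d p x) := by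
  rw [Matrix.isUnit_iff_isUnit_det, Matrix.det_of_isUpperTriangular]
  · have h1 : ∀ i, upperGauss d p x i i = 1 := by
      intro i
      simp only [upperGauss, Matrix.of_apply]
      rw [if_pos trivial, if_neg (by rintro ⟨rfl, h⟩; exact lt_irrefl _ h), add_zero]
    simp [h1]
  · intro i j hij
    have hij' : j < i := hij
    simp only [upperGauss, Matrix.of_apply]
    rw [if_neg hij'.ne', if_neg, add_zero]
    rintro ⟨rfl, h⟩
    exact lt_asymm h hij'

theorem permMat_mul_apply (d : ℕ) (σ : Equiv.Perm (Fin d)) (A : Matrix (Fin d) (Fin d) ℝ)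
    (i j : Fin d) : (permMat d σ * A) i j = A (σ i) j := by
  simp [Matrix.mul_apply, permMat]

theorem isUnit_permMat (d : ℕ) (σ : Equiv.Perm (Fin d)) : IsUnit (permMat d σ) := by
  refine IsUnit.of_mul_eq_one (permMat d σ⁻¹) ?_
  ext i j
  rw [permMat_mul_apply]
  simp [permMat, Matrix.one_apply]

/-- The Gauss elimination step: with `t` and `x` read off from row `p` of `A⁻¹`, row `p` of
`U P A` becomes a multiple of `e_p`. -/
theorem exists_gauss_step (d : ℕ) (p : Fin d) (A : Matrix (Fin d) (Fin d) ℝ)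
    (hA : IsBlockIdGL d (p : ℕ) A) :
    ∃ t : Fin d, p ≤ t ∧ ∃ x : Fin d → ℝ,
      IsBlockIdLowGL d p (upperGauss d p x * permMat d (Equiv.swap p t) * A) := by
  obtain ⟨hu, hid⟩ := hA
  have hdet := (Matrix.isUnit_iff_isUnit_det A).1 hu
  obtain ⟨y, hy⟩ : ∃ y : Fin d → ℝ, ∀ j, ∑ k, y k * A k j = if p = j then 1 else 0 := by
    refine ⟨A⁻¹ p, fun j => ?_⟩
    rw [← Matrix.mul_apply, Matrix.nonsing_inv_mul A hdet, Matrix.one_apply]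
  have hy0 : ∀ j < p, y j = 0 := by
    intro j hj
    have h := hy j
    rw [if_neg hj.ne', Finset.sum_congr rfl fun k _ => by rw [hid k j (Or.inr hj)]] at h
    simpa using h
  obtain ⟨t, ht⟩ : ∃ t, y t ≠ 0 := by
    by_contra! h
    simpa [h] using hy p
  have hpt : p ≤ t := not_lt.1 fun h => ht (hy0 t h)
  refine ⟨t, hpt, fun γ => y (Equiv.swap p t γ) / y t, ?_⟩
  set σ := Equiv.swap p t with hσ
  have hσlt : ∀ i < p, σ i = i := fun i hi =>
    Equiv.swap_apply_of_ne_of_ne hi.ne (hi.trans_le hpt).ne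
  have hσge : ∀ i, p ≤ i → p ≤ σ i := by
    intro i hi
    rw [hσ, Equiv.swap_apply_def]
    split_ifs <;> first | assumption | exact le_rfl
  set U := upperGauss d p (fun γ => y (σ γ) / y t) with hU
  have hUp : ∀ γ, U p γ = y (σ γ) / y t := by
    intro γ
    simp only [hU, upperGauss, Matrix.of_apply]
    rcases lt_trichotomy γ p with h | h | h
    · rw [if_neg h.ne', if_neg (fun h' => lt_asymm h h'.2), hσlt γ h, hy0 γ h]; simp
    · subst h; simp [hσ, ht]
    · simp [h, h.ne]
  have hrowp : ∀ j, (U * permMat d σ * A) p j = (if p = j then 1 else 0) / y t := by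
    intro j
    rw [Matrix.mul_assoc, Matrix.mul_apply, ← hy j, Finset.sum_div,
      ← Equiv.sum_comp σ (fun k => y k * A k j / y t)]
    refine Finset.sum_congr rfl fun γ _ => ?_
    rw [permMat_mul_apply, hUp]; ring
  have hrow : ∀ i j, i ≠ p → (U * permMat d σ * A) i j = A (σ i) j := by
    intro i j hi
    rw [Matrix.mul_assoc, Matrix.mul_apply]
    simp [hU, upperGauss, permMat_mul_apply, hi]
  refine ⟨((isUnit_upperGauss d p _).mul (isUnit_permMat d σ)).mul hu, ?_, ?_⟩
  · intro i j hij
    by_cases hi : i = p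
    · subst hi
      have hj : j < i := by simpa using hij
      rw [hrowp, if_neg hj.ne', zero_div]
    · rw [hrow i j hi]
      rcases lt_or_gt_of_ne hi with h | h
      · rw [hσlt i h, hid i j (Or.inl h)]
      · have hj : j < p := hij.resolve_left (not_lt.2 (Fin.le_def.1 h.le))
        rw [hid _ j (Or.inr hj), if_neg (hj.trans_le (hσge i h.le)).ne', if_neg (hj.trans h).ne']
  · intro j hj
    rw [hrowp, if_neg hj.ne, zero_div]

theorem stmt16 (d : ℕ) (p : Fin d) (hp : (p : ℕ) + 1 < d)
    (G : Fin d → Fin d → Fin d → ℝ)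
    (hG : ∃ A : Matrix (Fin d) (Fin d) ℝ,
      IsBlockIdGL d (p : ℕ) A ∧ G = congrAct A (coreTensor d)) :
    ∃ t : Fin d, p ≤ t ∧ ∃ x : Fin d → ℝ,
      ∀ H : Fin d → Fin d → Fin d → ℝ,
        H = congrAct (upperGauss d p x * permMat d (Equiv.swap p t)) G →
        (∃ A : Matrix (Fin d) (Fin d) ℝ,
            IsBlockIdLowGL d p A ∧ H = congrAct A (coreTensor d)) ∧
          H p p p ≠ 0 ∧
          (∀ i : Fin d, p ≤ i → H i p p = H p i p) ∧
          (∀ i j : Fin d, p ≤ j → H i p p * H p j p = H i j p * H p p p) ∧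
          (∀ j k : Fin d, p < j → p < k → H p p k * H p j p = H j p k * H p p p) := by
  obtain ⟨A, hA, rfl⟩ := hG
  obtain ⟨t, hpt, x, hA'⟩ := exists_gauss_step d p A hA
  refine ⟨t, hpt, x, ?_⟩
  rintro H rfl
  rw [congrAct_mul]
  generalize upperGauss d p x * permMat d (Equiv.swap p t) * A = A' at hA' ⊢
  have h0 := hA'.pivot_ne_zero
  refine ⟨⟨A', hA', rfl⟩, ?_, ?_, ?_, ?_⟩
  · rw [entry_ijp hA' p p le_rfl, core_sum_of_le hA' le_rfl]
    exact mul_ne_zero (mul_ne_zero h0 h0) h0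
  · intro i hi
    rw [entry_ijp hA' i p le_rfl, entry_ijp hA' p i hi, core_sum_of_le hA' le_rfl,
      core_sum_of_le hA' hi]
    ring
  · intro i j hj
    rw [entry_ijp hA' i p le_rfl, entry_ijp hA' p j hj, entry_ijp hA' i j hj,
      entry_ijp hA' p p le_rfl, core_sum_of_le hA' le_rfl]
    ring
  · intro j k hj _
    rw [entry_jpk hA' p k le_rfl, entry_ijp hA' p j hj.le, entry_jpk hA' j k hj.le,
      entry_ijp hA' p p le_rfl, core_sum_of_le hA' le_rfl]
    ring
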